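/- For every f with f+1 ≤ n and every formula ψ, the formula Byz_f ∧ B_{≥f+1}ψ → ψ is valid on the class KH: if at most f of the n agents are faulty and at least f+1 agents believe ψ, then ψ holds. -/

import Mathlib

/-- A Kripke model (raw data): valuation, and knowledge and hope relations for `n` agents. -/
structure Model (n : ℕ) (W : Type) where
  val : ℕ → W → Prop
  K : Fin n → W → W → Prop
  H : Fin n → W → W → Prop

/-- Membership in the class KH: each `K i` is an equivalence relation, each `H i` is
shift-serial, `H i ⊆ K i` (HinK), and oneH. -/
def Model.KH {n : ℕ} {W : Type} (M : Model n W) : Prop :=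
  (∀ i, Equivalence (M.K i)) ∧
  (∀ i w v, M.H i w v → ∃ z, M.H i v z) ∧
  (∀ i w v, M.H i w v → M.K i w v) ∧
  (∀ i w v, (∃ x, M.H i w x) → (∃ x, M.H i v x) → M.K i w v → M.H i w v)

/-- Formulas of the language `L_KH^pub`: atoms, negation, conjunction, knowledge `K i`,
hope `H i`, and public hope update `[φ_1,…,φ_n]ψ` (the tuple given as `Fin n → Form n`). -/
inductive Form (n : ℕ) : Type where
  | atom : ℕ → Form n
  | neg : Form n → Form n
  | and : Form n → Form n → Form n
  | know : Fin n → Form n → Form n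
  | hope : Fin n → Form n → Form n
  | upd : (Fin n → Form n) → Form n → Form n

/-- Replace the hope relations: `w H_i^χ v` iff `w K_i v`, `c i` holds at `w`, and at `v`. -/
def Model.hopeUpd {n : ℕ} {W : Type} (M : Model n W) (c : Fin n → W → Prop) : Model n W where
  val := M.val
  K := M.K
  H := fun i w v => M.K i w v ∧ c i w ∧ c i v

/-- Truth at a world. -/
def sat {n : ℕ} {W : Type} : Model n W → W → Form n → Prop
  | M, w, .atom p => M.val p w
  | M, w, .neg φ => ¬ sat M w φ
  | M, w, .and φ ψ => sat M w φ ∧ sat M w ψ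
  | M, w, .know i φ => ∀ v, M.K i w v → sat M v φ
  | M, w, .hope i φ => ∀ v, M.H i w v → sat M v φ
  | M, w, .upd φs ψ => sat (M.hopeUpd (fun i v => sat M v (φs i))) w ψ

/-- The publicly updated model `M^{φ⃗}`. -/
def Model.pubUpdate {n : ℕ} {W : Type} (M : Model n W) (φs : Fin n → Form n) : Model n W :=
  M.hopeUpd (fun i v => sat M v (φs i))

def ftop {n : ℕ} : Form n := .neg (.and (.atom 0) (.neg (.atom 0)))
def fbot {n : ℕ} : Form n := .neg ftop
def fimpl {n : ℕ} (φ ψ : Form n) : Form n := .neg (.and φ (.neg ψ))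
def forr {n : ℕ} (φ ψ : Form n) : Form n := .neg (.and (.neg φ) (.neg ψ))
def fiff {n : ℕ} (φ ψ : Form n) : Form n := .and (fimpl φ ψ) (fimpl ψ φ)
/-- `¬H_i⊥`: agent `i` is correct. -/
def fcorrect {n : ℕ} (i : Fin n) : Form n := .neg (.hope i fbot)

/-- Validity on the class KH: true at every world of every (nonempty) model in KH. -/
def Valid {n : ℕ} (φ : Form n) : Prop :=
  ∀ (W : Type) (M : Model n W), Nonempty W → M.KH → ∀ w : W, sat M w φ

/-- Conjunction of a list of formulas. -/
def bigAnd {n : ℕ} : List (Form n) → Form n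
  | [] => ftop
  | φ :: l => .and φ (bigAnd l)

/-- Disjunction of a list of formulas. -/
def bigOr {n : ℕ} : List (Form n) → Form n
  | [] => fbot
  | φ :: l => forr φ (bigOr l)

/-- The list of all groups `G ⊆ A` of agents with `|G| = k`. -/
noncomputable def groups (n k : ℕ) : List (Finset (Fin n)) :=
  ((Finset.univ : Finset (Fin n)).powerset.filter (fun G => G.card = k)).toList

/-- `Byz_f := ⋁_{G⊆A, |G|=n−f} ⋀_{i∈G} ¬H_i⊥`: at least `n−f` agents are correct,
i.e., at most `f` agents are faulty. -/
noncomputable def Byz (n f : ℕ) : Form n :=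
  bigOr ((groups n (n - f)).map (fun G => bigAnd (G.toList.map (fun i => fcorrect i))))

/-- `φ⃗^k := ⋁_{G⊆A, |G|=k} ⋀_{i∈G} φ_i`: at least `k` of the formulas `φ_i` hold. -/
noncomputable def vecAtLeast {n : ℕ} (φs : Fin n → Form n) (k : ℕ) : Form n :=
  bigOr ((groups n k).map (fun G => bigAnd (G.toList.map φs)))

/-- Belief: `B_i ψ := K_i(¬H_i⊥ → ψ)`. -/
def fbel {n : ℕ} (i : Fin n) (ψ : Form n) : Form n := .know i (fimpl (fcorrect i) ψ)

/-- `B_{≥f}ψ := ⋁_{G⊆A, |G|=f} ⋀_{i∈G} B_i ψ`: at least `f` agents believe `ψ`. -/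
noncomputable def Bge (n f : ℕ) (ψ : Form n) : Form n :=
  bigOr ((groups n f).map (fun G => bigAnd (G.toList.map (fun i => fbel i ψ))))

/- The `n - f` correct agents and the `f + 1` believers together outnumber the agents, so some
correct agent believes `ψ`. Knowledge being reflexive, what a correct agent believes is true. -/

section Semantics

variable {n : ℕ} {W : Type} {M : Model n W} {w : W} {φ ψ : Form n}

@[simp]
theorem sat_ftop : sat M w ftop := by
  simp [ftop, sat]

@[simp]
theorem not_sat_fbot : ¬ sat M w fbot := by
  simp [fbot, sat]

@[simp]
theorem sat_fimpl : sat M w (fimpl φ ψ) ↔ (sat M w φ → sat M w ψ) := by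
  simp [fimpl, sat]

@[simp]
theorem sat_forr : sat M w (forr φ ψ) ↔ sat M w φ ∨ sat M w ψ := by
  simp [forr, sat, or_iff_not_imp_left]

@[simp]
theorem sat_bigAnd {l : List (Form n)} : sat M w (bigAnd l) ↔ ∀ φ ∈ l, sat M w φ := by
  induction l with
  | nil => simp [bigAnd]
  | cons χ l ih => simp [bigAnd, sat, ih]

@[simp]
theorem sat_bigOr {l : List (Form n)} : sat M w (bigOr l) ↔ ∃ φ ∈ l, sat M w φ := by
  induction l with
  | nil => simp [bigOr]
  | cons χ l ih => simp [bigOr, ih]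

@[simp]
theorem mem_groups {k : ℕ} {G : Finset (Fin n)} : G ∈ groups n k ↔ G.card = k := by
  simp [groups]

theorem sat_vecAtLeast {φs : Fin n → Form n} {k : ℕ} :
    sat M w (vecAtLeast φs k) ↔ ∃ G : Finset (Fin n), G.card = k ∧ ∀ i ∈ G, sat M w (φs i) := by
  simp [vecAtLeast]

theorem exists_sat_and_sat_of_vecAtLeast {φs ψs : Fin n → Form n} {k l : ℕ} (hkl : n < k + l)
    (hφ : sat M w (vecAtLeast φs k)) (hψ : sat M w (vecAtLeast ψs l)) :
    ∃ i, sat M w (φs i) ∧ sat M w (ψs i) := by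
  obtain ⟨G, rfl, hG⟩ := sat_vecAtLeast.mp hφ
  obtain ⟨G', rfl, hG'⟩ := sat_vecAtLeast.mp hψ
  have hcard : (Finset.univ : Finset (Fin n)).card < G.card + G'.card := by
    rwa [Finset.card_fin]
  obtain ⟨i, hi⟩ := Finset.inter_nonempty_of_card_lt_card_add_card
    G.subset_univ G'.subset_univ hcard
  rw [Finset.mem_inter] at hi
  exact ⟨i, hG i hi.1, hG' i hi.2⟩

theorem Byz_eq_vecAtLeast (n f : ℕ) : Byz n f = vecAtLeast fcorrect (n - f) :=
  rfl

theorem Bge_eq_vecAtLeast (k : ℕ) (ψ : Form n) : Bge n k ψ = vecAtLeast (fbel · ψ) k :=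
  rfl

theorem sat_of_fcorrect_of_fbel {i : Fin n} (hrefl : M.K i w w) (hcorrect : sat M w (fcorrect i))
    (hbel : sat M w (fbel i ψ)) : sat M w ψ :=
  sat_fimpl.mp (hbel w hrefl) hcorrect

end Semantics

theorem byz_belief_implies_general {n f : ℕ} {W : Type} {M : Model n W} {w : W}
    (hrefl : ∀ i, M.K i w w) (ψ : Form n) :
    sat M w (fimpl (.and (Byz n f) (Bge n (f + 1) ψ)) ψ) := by
  rw [sat_fimpl, Byz_eq_vecAtLeast, Bge_eq_vecAtLeast]
  rintro ⟨hbyz, hbge⟩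
  obtain ⟨i, hcorrect, hbel⟩ := exists_sat_and_sat_of_vecAtLeast (by omega) hbyz hbge
  exact sat_of_fcorrect_of_fbel (hrefl i) hcorrect hbel

/-- for every `f` with `f+1 ≤ n` and every formula `ψ`, the formula
`Byz_f ∧ B_{≥f+1}ψ → ψ` is valid on the class KH. -/
theorem byz_belief_implies {n f : ℕ} (hn : 0 < n) (hf : f + 1 ≤ n) (ψ : Form n) :
    Valid (fimpl (.and (Byz n f) (Bge n (f + 1) ψ)) ψ) :=
  fun _ _ _ hM w => byz_belief_implies_general (fun i => (hM.1 i).refl w) ψ
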